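/- Under the adapted pure-frontal setup with focal data, assume κ_t(0) ≠ 0. Then for j = 1,2, the origin 0 (a pure-frontal singular point of f) is also a singular point of the focal surface C_j (i.e. rank d(C_j)_0 ≤ 1) if and only if r_c(0) = 0. -/

import Mathlib

open Filter

noncomputable section

/-- Vectors in ℝ³, modeled as `Fin 3 → ℝ`. -/
abbrev R3 : Type := Fin 3 → ℝ

/-- The Euclidean inner product on ℝ³. -/
def dot3 (a b : R3) : ℝ := a 0 * b 0 + a 1 * b 1 + a 2 * b 2

/-- The Euclidean norm on ℝ³. -/
def norm3 (a : R3) : ℝ := Real.sqrt (dot3 a a)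

/-- Partial derivative in the `u`-direction. -/
def pu {E : Type*} [NormedAddCommGroup E] [NormedSpace ℝ E] (F : ℝ × ℝ → E) (p : ℝ × ℝ) : E :=
  fderiv ℝ F p (1, 0)

/-- Partial derivative in the `v`-direction. -/
def pv {E : Type*} [NormedAddCommGroup E] [NormedSpace ℝ E] (F : ℝ × ℝ → E) (p : ℝ × ℝ) : E :=
  fderiv ℝ F p (0, 1)

/-- The adapted pure-frontal setup: `f` is a frontal with unit normal `ν`,
`f_v = v·h`, `ν_v = v·ν₁`, the frame `{f_u, h, ν}` is linearly independent everywhere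
and orthonormal along the `u`-axis. -/
structure AdaptedPureFrontal (f ν h ν₁ : ℝ × ℝ → R3) : Prop where
  smooth_f : ContDiff ℝ (⊤ : ℕ∞) f
  smooth_ν : ContDiff ℝ (⊤ : ℕ∞) ν
  smooth_h : ContDiff ℝ (⊤ : ℕ∞) h
  smooth_ν₁ : ContDiff ℝ (⊤ : ℕ∞) ν₁
  unit_ν : ∀ p, dot3 (ν p) (ν p) = 1
  orth_fu_ν : ∀ p, dot3 (pu f p) (ν p) = 0
  orth_fv_ν : ∀ p, dot3 (pv f p) (ν p) = 0
  fv_eq : ∀ p : ℝ × ℝ, pv f p = p.2 • h p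
  νv_eq : ∀ p : ℝ × ℝ, pv ν p = p.2 • ν₁ p
  indep : ∀ p, LinearIndependent ℝ ![pu f p, h p, ν p]
  adapted_fu : ∀ u : ℝ, dot3 (pu f (u, 0)) (pu f (u, 0)) = 1
  adapted_h : ∀ u : ℝ, dot3 (h (u, 0)) (h (u, 0)) = 1
  adapted_fu_h : ∀ u : ℝ, dot3 (pu f (u, 0)) (h (u, 0)) = 0
  adapted_h_ν : ∀ u : ℝ, dot3 (h (u, 0)) (ν (u, 0)) = 0

/-- Ẽ = ⟨f_u, f_u⟩. -/
def Et (f : ℝ × ℝ → R3) (p : ℝ × ℝ) : ℝ := dot3 (pu f p) (pu f p)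

/-- F̃ = ⟨f_u, h⟩. -/
def Ft (f h : ℝ × ℝ → R3) (p : ℝ × ℝ) : ℝ := dot3 (pu f p) (h p)

/-- G̃ = ⟨h, h⟩. -/
def Gt (h : ℝ × ℝ → R3) (p : ℝ × ℝ) : ℝ := dot3 (h p) (h p)

/-- L̃ = −⟨f_u, ν_u⟩. -/
def Lt (f ν : ℝ × ℝ → R3) (p : ℝ × ℝ) : ℝ := -dot3 (pu f p) (pu ν p)

/-- M̃ = −⟨h, ν_u⟩. -/
def Mt (h ν : ℝ × ℝ → R3) (p : ℝ × ℝ) : ℝ := -dot3 (h p) (pu ν p)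

/-- Ñ₁ = −⟨h, ν₁⟩. -/
def Nt1 (h ν₁ : ℝ × ℝ → R3) (p : ℝ × ℝ) : ℝ := -dot3 (h p) (ν₁ p)

/-- The Gaussian curvature K = (L̃Ñ₁ − M̃²)/(ẼG̃ − F̃²). -/
def Kg (f ν h ν₁ : ℝ × ℝ → R3) (p : ℝ × ℝ) : ℝ :=
  (Lt f ν p * Nt1 h ν₁ p - Mt h ν p ^ 2) / (Et f p * Gt h p - Ft f h p ^ 2)

/-- The mean curvature H = (ẼÑ₁ − 2F̃M̃ + G̃L̃)/(2(ẼG̃ − F̃²)). -/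
def Hm (f ν h ν₁ : ℝ × ℝ → R3) (p : ℝ × ℝ) : ℝ :=
  (Et f p * Nt1 h ν₁ p - 2 * Ft f h p * Mt h ν p + Gt h p * Lt f ν p) /
    (2 * (Et f p * Gt h p - Ft f h p ^ 2))

/-- The principal curvature κ = H + ε√(H² − K); `ε = 1` gives κ₁ and `ε = -1` gives κ₂. -/
def kap (f ν h ν₁ : ℝ × ℝ → R3) (ε : ℝ) (p : ℝ × ℝ) : ℝ :=
  Hm f ν h ν₁ p + ε * Real.sqrt (Hm f ν h ν₁ p ^ 2 - Kg f ν h ν₁ p)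

/-- First component of the principal vector field V = −v(M̃ − κF̃)∂_u + (L̃ − κẼ)∂_v. -/
def V1c (f ν h ν₁ : ℝ × ℝ → R3) (ε : ℝ) (p : ℝ × ℝ) : ℝ :=
  -(p.2 * (Mt h ν p - kap f ν h ν₁ ε p * Ft f h p))

/-- Second component of the principal vector field V = −v(M̃ − κF̃)∂_u + (L̃ − κẼ)∂_v. -/
def V2c (f ν h ν₁ : ℝ × ℝ → R3) (ε : ℝ) (p : ℝ × ℝ) : ℝ :=
  Lt f ν p - kap f ν h ν₁ ε p * Et f p

/-- Directional derivative of `g` along the principal vector field V. -/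
def VD (f ν h ν₁ : ℝ × ℝ → R3) (ε : ℝ) {E : Type*} [NormedAddCommGroup E] [NormedSpace ℝ E]
    (g : ℝ × ℝ → E) (p : ℝ × ℝ) : E :=
  V1c f ν h ν₁ ε p • pu g p + V2c f ν h ν₁ ε p • pv g p

/-- The radius of principal curvature ρ = 1/κ. -/
def rho (f ν h ν₁ : ℝ × ℝ → R3) (ε : ℝ) (p : ℝ × ℝ) : ℝ := (kap f ν h ν₁ ε p)⁻¹

/-- The focal surface C = f + ρ·ν. -/
def Cf (f ν h ν₁ : ℝ × ℝ → R3) (ε : ℝ) (p : ℝ × ℝ) : R3 :=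
  f p + rho f ν h ν₁ ε p • ν p

/-- The normal direction x = −(M̃ − κF̃)·f_u + (L̃ − κẼ)·h of the focal surface. -/
def xj (f ν h ν₁ : ℝ × ℝ → R3) (ε : ℝ) (p : ℝ × ℝ) : R3 :=
  (-(Mt h ν p - kap f ν h ν₁ ε p * Ft f h p)) • pu f p +
    (Lt f ν p - kap f ν h ν₁ ε p * Et f p) • h p

/-- The unit normal e = x/‖x‖ of the focal surface. -/
def ej (f ν h ν₁ : ℝ × ℝ → R3) (ε : ℝ) (p : ℝ × ℝ) : R3 :=
  (norm3 (xj f ν h ν₁ ε p))⁻¹ • xj f ν h ν₁ ε p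

/-- The limiting normal curvature κ_ν(u) = L̃(u,0). -/
def kν (f ν : ℝ × ℝ → R3) (u : ℝ) : ℝ := Lt f ν (u, 0)

/-- The cuspidal torsion κ_t(u) = M̃(u,0). -/
def kt (h ν : ℝ × ℝ → R3) (u : ℝ) : ℝ := Mt h ν (u, 0)

/-- The bias r_b(u) = 3Ñ₁(u,0). -/
def rb (h ν₁ : ℝ × ℝ → R3) (u : ℝ) : ℝ := 3 * Nt1 h ν₁ (u, 0)

/-- The secondary cuspidal curvature r_c(u) = 24((Ñ₁)_v − 2F̃_vM̃ − G̃_vÑ₁)(u,0). -/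
def rc (f ν h ν₁ : ℝ × ℝ → R3) (u : ℝ) : ℝ :=
  24 * (pv (Nt1 h ν₁) (u, 0) - 2 * pv (Ft f h) (u, 0) * Mt h ν (u, 0) -
    pv (Gt h) (u, 0) * Nt1 h ν₁ (u, 0))

/-- The singular curvature κ_s(u) = ⟨f_uu, h⟩(u,0). -/
def ks (f h : ℝ × ℝ → R3) (u : ℝ) : ℝ := dot3 (pu (pu f) (u, 0)) (h (u, 0))

/-- The rank of the differential of `F` at `p`. -/
def rankAt (F : ℝ × ℝ → R3) (p : ℝ × ℝ) : ℕ :=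
  Module.finrank ℝ (LinearMap.range (fderiv ℝ F p).toLinearMap)

/-!
Along the singular curve `v = 0` the frame `{f_u, h, ν}` is orthonormal and `f_v = ν_v = 0`, so
there `(C_j)_v = (ρ_j)_v • ν`, while `⟨(C_j)_u, h⟩ = -ρ_j κ_t ≠ 0 = ⟨ν, h⟩`. Hence `C_j` is
singular exactly when `(ρ_j)_v`, equivalently `(κ_j)_v`, vanishes. Differentiating the
characteristic equation `(L̃ - κẼ)(Ñ₁ - κG̃) = (M̃ - κF̃)²` in `v`, where `Ẽ_v = L̃_v = 0` and
`M̃_v = L̃ F̃_v + M̃ G̃_v / 2`, gives `(κ_j)_v (L̃ + Ñ₁ - 2κ_j) = (L̃ - κ_j) r_c / 24` on `v = 0`,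
and both `L̃ + Ñ₁ - 2κ_j` and `L̃ - κ_j` are nonzero there when `κ_t ≠ 0`.
-/

section LinearAlgebra

open scoped Matrix

lemma dotProduct_eq_sum_of_orthonormal {ι R : Type*} [Fintype ι] [DecidableEq ι] [CommRing R]
    {e : ι → ι → R} (he : ∀ i j, e i ⬝ᵥ e j = if i = j then 1 else 0) (x y : ι → R) :
    x ⬝ᵥ y = ∑ i, (x ⬝ᵥ e i) * (e i ⬝ᵥ y) := by
  have rows : Matrix.of e * (Matrix.of e)ᵀ = 1 := by
    ext i j
    simp only [Matrix.mul_apply', Matrix.one_apply]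
    exact he i j
  calc x ⬝ᵥ y = x ⬝ᵥ (((Matrix.of e)ᵀ * Matrix.of e) *ᵥ y) := by
        rw [mul_eq_one_comm.mp rows, Matrix.one_mulVec]
    _ = (x ᵥ* (Matrix.of e)ᵀ) ⬝ᵥ (Matrix.of e *ᵥ y) := by
        rw [← Matrix.mulVec_mulVec, Matrix.dotProduct_mulVec]
    _ = ∑ i, (x ⬝ᵥ e i) * (e i ⬝ᵥ y) := rfl

lemma linearIndependent_pair_smul_right_iff {K V : Type*} [Field K] [AddCommGroup V] [Module K V]
    {x y : V} (hxy : LinearIndependent K ![x, y]) {c : K} :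
    LinearIndependent K ![x, c • y] ↔ c ≠ 0 := by
  refine ⟨fun hli => left_ne_zero_of_smul (hli.ne_zero 1), fun hc => ?_⟩
  simpa only [one_smul] using
    (LinearIndependent.pair_smul_smul_iff isUnit_one (isUnit_iff_ne_zero.mpr hc)).mpr hxy

lemma dot3_eq_dotProduct (a b : R3) : dot3 a b = a ⬝ᵥ b :=
  (Matrix.vec3_dotProduct a b).symm

lemma dot3_comm (a b : R3) : dot3 a b = dot3 b a := by
  simp only [dot3_eq_dotProduct, dotProduct_comm]

lemma dot3_add_left (a b c : R3) : dot3 (a + b) c = dot3 a c + dot3 b c := by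
  simp only [dot3_eq_dotProduct, add_dotProduct]

lemma dot3_smul_left (r : ℝ) (a b : R3) : dot3 (r • a) b = r * dot3 a b := by
  simp only [dot3_eq_dotProduct, smul_dotProduct, smul_eq_mul]

lemma dot3_zero_left (a : R3) : dot3 0 a = 0 := by
  simp only [dot3_eq_dotProduct, zero_dotProduct]

lemma dot3_zero_right (a : R3) : dot3 a 0 = 0 := by
  rw [dot3_comm, dot3_zero_left]

lemma dot3_eq_sum_of_orthonormal {a b n : R3} (haa : dot3 a a = 1) (hbb : dot3 b b = 1)
    (hnn : dot3 n n = 1) (hab : dot3 a b = 0) (han : dot3 a n = 0) (hbn : dot3 b n = 0)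
    (x y : R3) :
    dot3 x y = dot3 x a * dot3 a y + dot3 x b * dot3 b y + dot3 x n * dot3 n y := by
  simp only [dot3_eq_dotProduct] at *
  have orthonormal : ∀ i j, ![a, b, n] i ⬝ᵥ ![a, b, n] j = if i = j then 1 else 0 := by
    intro i j
    fin_cases i <;> fin_cases j <;> simp [*, dotProduct_comm b a, dotProduct_comm n]
  exact (dotProduct_eq_sum_of_orthonormal orthonormal x y).trans (Fin.sum_univ_three _)

lemma linearIndependent_pair_of_dot3 {x n w : R3} (hn : n ≠ 0) (hnw : dot3 n w = 0)
    (hxw : dot3 x w ≠ 0) : LinearIndependent ℝ ![x, n] := by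
  rw [LinearIndependent.pair_symm_iff, LinearIndependent.pair_iff' hn]
  rintro c rfl
  exact hxw (by rw [dot3_smul_left, hnw, mul_zero])

end LinearAlgebra

section PartialDerivatives

variable {E : Type*} [NormedAddCommGroup E] [NormedSpace ℝ E]

lemma hasDerivAt_pv {F : ℝ × ℝ → E} {u v : ℝ} (hF : DifferentiableAt ℝ F (u, v)) :
    HasDerivAt (fun t => F (u, t)) (pv F (u, v)) v :=
  hF.hasFDerivAt.comp_hasDerivAt v ((hasDerivAt_const v u).prodMk (hasDerivAt_id v))

lemma differentiableAt_fderiv {V : Type*} [NormedAddCommGroup V] [NormedSpace ℝ V] {F : V → E}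
    {p : V} (hF : ContDiffAt ℝ 2 F p) : DifferentiableAt ℝ (fderiv ℝ F) p :=
  (hF.fderiv_right (m := 1) (by norm_num)).differentiableAt one_ne_zero

lemma differentiableAt_pu {F : ℝ × ℝ → E} {p : ℝ × ℝ} (hF : ContDiffAt ℝ 2 F p) :
    DifferentiableAt ℝ (pu F) p :=
  (differentiableAt_fderiv hF).clm_apply (differentiableAt_const _)

lemma pv_pu_comm {F : ℝ × ℝ → E} {p : ℝ × ℝ} (hF : ContDiffAt ℝ 2 F p) :
    pv (pu F) p = pu (pv F) p := by
  have fderiv_directional (w z : ℝ × ℝ) :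
      fderiv ℝ (fun q => fderiv ℝ F q w) p z = fderiv ℝ (fderiv ℝ F) p z w := by
    rw [fderiv_clm_apply (differentiableAt_fderiv hF) (differentiableAt_const w)]
    simp
  calc pv (pu F) p = fderiv ℝ (fderiv ℝ F) p (0, 1) (1, 0) := fderiv_directional _ _
    _ = fderiv ℝ (fderiv ℝ F) p (1, 0) (0, 1) := (hF.isSymmSndFDerivAt (by simp)).eq _ _
    _ = pu (pv F) p := (fderiv_directional _ _).symm

lemma pv_pu_eq_zero_of_pv_eq_smul {F g : ℝ × ℝ → E} {u : ℝ} (hF : ContDiffAt ℝ 2 F (u, 0))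
    (hg : DifferentiableAt ℝ g (u, 0)) (hFg : ∀ p : ℝ × ℝ, pv F p = p.2 • g p) :
    pv (pu F) (u, 0) = 0 := by
  rw [pv_pu_comm hF, funext hFg, pu, fderiv_fun_smul differentiableAt_snd hg]
  simp [fderiv_snd]

lemma differentiableAt_dot3 {a b : E → R3} {p : E} (ha : DifferentiableAt ℝ a p)
    (hb : DifferentiableAt ℝ b p) : DifferentiableAt ℝ (fun q => dot3 (a q) (b q)) p := by
  unfold dot3
  fun_prop

lemma hasDerivAt_dot3 {a b : ℝ → R3} {a' b' : R3} {t : ℝ} (ha : HasDerivAt a a' t)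
    (hb : HasDerivAt b b' t) :
    HasDerivAt (fun s => dot3 (a s) (b s)) (dot3 a' (b t) + dot3 (a t) b') t := by
  have coord (i : Fin 3) := (hasDerivAt_pi.mp ha i).mul (hasDerivAt_pi.mp hb i)
  refine (((coord 0).add (coord 1)).add (coord 2)).congr_deriv ?_
  unfold dot3
  ring

lemma pv_dot3 {a b : ℝ × ℝ → R3} {p : ℝ × ℝ} (ha : DifferentiableAt ℝ a p)
    (hb : DifferentiableAt ℝ b p) :
    pv (fun q => dot3 (a q) (b q)) p = dot3 (pv a p) (b p) + dot3 (a p) (pv b p) :=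
  (hasDerivAt_pv (differentiableAt_dot3 ha hb)).unique
    (hasDerivAt_dot3 (hasDerivAt_pv ha) (hasDerivAt_pv hb))

lemma pv_neg (F : ℝ × ℝ → E) (p : ℝ × ℝ) : pv (fun q => -F q) p = -pv F p := by
  rw [pv, fderiv_fun_neg]
  rfl

lemma rankAt_le_one_iff (F : ℝ × ℝ → R3) (p : ℝ × ℝ) :
    rankAt F p ≤ 1 ↔ ¬ LinearIndependent ℝ ![pu F p, pv F p] := by
  have range_eq_span : (fderiv ℝ F p).toLinearMap.range =
      Submodule.span ℝ (Set.range ![pu F p, pv F p]) := by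
    ext x
    simp only [Matrix.range_cons, Matrix.range_empty, Set.union_empty, Set.singleton_union,
      Submodule.mem_span_pair, LinearMap.mem_range, Prod.exists]
    refine exists₂_congr fun s t => ?_
    rw [pu, pv, ← map_smul, ← map_smul, ← map_add]
    simp
  rw [rankAt, range_eq_span, linearIndependent_iff_card_le_finrank_span, Fintype.card_fin,
    Set.finrank]
  omega

end PartialDerivatives

lemma kap_characteristic {f ν h ν₁ : ℝ × ℝ → R3} {ε : ℝ} {p : ℝ × ℝ} (hε : ε = 1 ∨ ε = -1)
    (hgram : Et f p * Gt h p - Ft f h p ^ 2 ≠ 0)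
    (hdiscr : 0 ≤ Hm f ν h ν₁ p ^ 2 - Kg f ν h ν₁ p) :
    (Lt f ν p - kap f ν h ν₁ ε p * Et f p) * (Nt1 h ν₁ p - kap f ν h ν₁ ε p * Gt h p) =
      (Mt h ν p - kap f ν h ν₁ ε p * Ft f h p) ^ 2 := by
  have hε2 : ε ^ 2 = 1 := by rcases hε with rfl | rfl <;> norm_num
  have quadratic : kap f ν h ν₁ ε p ^ 2 - 2 * Hm f ν h ν₁ p * kap f ν h ν₁ ε p
      + Kg f ν h ν₁ p = 0 := by
    unfold kap
    linear_combination (Hm f ν h ν₁ p ^ 2 - Kg f ν h ν₁ p) * hε2 + ε ^ 2 * Real.sq_sqrt hdiscr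
  have mean : Hm f ν h ν₁ p * (2 * (Et f p * Gt h p - Ft f h p ^ 2)) =
      Et f p * Nt1 h ν₁ p - 2 * Ft f h p * Mt h ν p + Gt h p * Lt f ν p :=
    div_mul_cancel₀ _ (mul_ne_zero two_ne_zero hgram)
  have gauss : Kg f ν h ν₁ p * (Et f p * Gt h p - Ft f h p ^ 2) =
      Lt f ν p * Nt1 h ν₁ p - Mt h ν p ^ 2 :=
    div_mul_cancel₀ _ hgram
  linear_combination (Et f p * Gt h p - Ft f h p ^ 2) * quadratic + kap f ν h ν₁ ε p * mean - gauss

namespace AdaptedPureFrontal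

variable {f ν h ν₁ : ℝ × ℝ → R3}

section Smoothness

variable (H : AdaptedPureFrontal f ν h ν₁)
include H

lemma contDiff_two_f : ContDiff ℝ 2 f := contDiff_infty.mp H.smooth_f 2

lemma contDiff_two_ν : ContDiff ℝ 2 ν := contDiff_infty.mp H.smooth_ν 2

lemma differentiable_f : Differentiable ℝ f := H.smooth_f.differentiable (by simp)

lemma differentiable_ν : Differentiable ℝ ν := H.smooth_ν.differentiable (by simp)

lemma differentiable_h : Differentiable ℝ h := H.smooth_h.differentiable (by simp)

lemma differentiable_ν₁ : Differentiable ℝ ν₁ := H.smooth_ν₁.differentiable (by simp)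

lemma differentiable_pu_f : Differentiable ℝ (pu f) := fun _ =>
  differentiableAt_pu H.contDiff_two_f.contDiffAt

lemma differentiable_pu_ν : Differentiable ℝ (pu ν) := fun _ =>
  differentiableAt_pu H.contDiff_two_ν.contDiffAt

lemma differentiable_Et : Differentiable ℝ (Et f) :=
  fun p => differentiableAt_dot3 (H.differentiable_pu_f p) (H.differentiable_pu_f p)

lemma differentiable_Ft : Differentiable ℝ (Ft f h) :=
  fun p => differentiableAt_dot3 (H.differentiable_pu_f p) (H.differentiable_h p)

lemma differentiable_Gt : Differentiable ℝ (Gt h) :=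
  fun p => differentiableAt_dot3 (H.differentiable_h p) (H.differentiable_h p)

lemma differentiable_Lt : Differentiable ℝ (Lt f ν) :=
  fun p => (differentiableAt_dot3 (H.differentiable_pu_f p) (H.differentiable_pu_ν p)).neg

lemma differentiable_Mt : Differentiable ℝ (Mt h ν) :=
  fun p => (differentiableAt_dot3 (H.differentiable_h p) (H.differentiable_pu_ν p)).neg

lemma differentiable_Nt1 : Differentiable ℝ (Nt1 h ν₁) :=
  fun p => (differentiableAt_dot3 (H.differentiable_h p) (H.differentiable_ν₁ p)).neg

lemma differentiable_gram : Differentiable ℝ fun p => Et f p * Gt h p - Ft f h p ^ 2 :=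
  (H.differentiable_Et.mul H.differentiable_Gt).sub (H.differentiable_Ft.pow 2)

end Smoothness

section SingularCurve

variable (H : AdaptedPureFrontal f ν h ν₁)
include H

lemma Et_axis (u : ℝ) : Et f (u, 0) = 1 := H.adapted_fu u

lemma Ft_axis (u : ℝ) : Ft f h (u, 0) = 0 := H.adapted_fu_h u

lemma Gt_axis (u : ℝ) : Gt h (u, 0) = 1 := H.adapted_h u

lemma gram_axis (u : ℝ) : Et f (u, 0) * Gt h (u, 0) - Ft f h (u, 0) ^ 2 = 1 := by
  rw [H.Et_axis, H.Gt_axis, H.Ft_axis]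
  norm_num

lemma gram_axis_ne_zero (u : ℝ) : Et f (u, 0) * Gt h (u, 0) - Ft f h (u, 0) ^ 2 ≠ 0 := by
  rw [H.gram_axis]
  exact one_ne_zero

lemma Hm_axis (u : ℝ) : Hm f ν h ν₁ (u, 0) = (Lt f ν (u, 0) + Nt1 h ν₁ (u, 0)) / 2 := by
  rw [Hm, H.gram_axis, H.Et_axis, H.Gt_axis, H.Ft_axis]
  ring

lemma Kg_axis (u : ℝ) :
    Kg f ν h ν₁ (u, 0) = Lt f ν (u, 0) * Nt1 h ν₁ (u, 0) - Mt h ν (u, 0) ^ 2 := by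
  rw [Kg, H.gram_axis, div_one]

lemma discr_axis_pos {u : ℝ} (hkt : kt h ν u ≠ 0) :
    0 < Hm f ν h ν₁ (u, 0) ^ 2 - Kg f ν h ν₁ (u, 0) := by
  have sum_of_squares : Hm f ν h ν₁ (u, 0) ^ 2 - Kg f ν h ν₁ (u, 0) =
      ((Lt f ν (u, 0) - Nt1 h ν₁ (u, 0)) / 2) ^ 2 + kt h ν u ^ 2 := by
    rw [H.Hm_axis, H.Kg_axis, kt]
    ring
  rw [sum_of_squares]
  positivity

lemma dot3_h_ν (p : ℝ × ℝ) : dot3 (h p) (ν p) = 0 := by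
  obtain ⟨u, v⟩ := p
  rcases eq_or_ne v 0 with rfl | hv
  · exact H.adapted_h_ν u
  · have orth := H.orth_fv_ν (u, v)
    rw [H.fv_eq, dot3_smul_left] at orth
    exact (mul_eq_zero.mp orth).resolve_left hv

lemma pv_f_axis (u : ℝ) : pv f (u, 0) = 0 := by rw [H.fv_eq, zero_smul]

lemma pv_ν_axis (u : ℝ) : pv ν (u, 0) = 0 := by rw [H.νv_eq, zero_smul]

lemma pv_pu_f_axis (u : ℝ) : pv (pu f) (u, 0) = 0 :=
  pv_pu_eq_zero_of_pv_eq_smul H.contDiff_two_f.contDiffAt (H.differentiable_h _) H.fv_eq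

lemma pv_pu_ν_axis (u : ℝ) : pv (pu ν) (u, 0) = 0 :=
  pv_pu_eq_zero_of_pv_eq_smul H.contDiff_two_ν.contDiffAt (H.differentiable_ν₁ _) H.νv_eq

lemma dot3_pv_h_ν_axis (u : ℝ) : dot3 (pv h (u, 0)) (ν (u, 0)) = 0 := by
  have leibniz := pv_dot3 (H.differentiable_h (u, 0)) (H.differentiable_ν (u, 0))
  rw [funext H.dot3_h_ν, H.pv_ν_axis, dot3_zero_right, add_zero] at leibniz
  rw [← leibniz, pv, fderiv_const_apply, zero_apply]

lemma pv_Et_axis (u : ℝ) : pv (Et f) (u, 0) = 0 := by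
  unfold Et
  rw [pv_dot3 (H.differentiable_pu_f _) (H.differentiable_pu_f _), H.pv_pu_f_axis,
    dot3_zero_left, dot3_zero_right, add_zero]

lemma pv_Ft_axis (u : ℝ) : pv (Ft f h) (u, 0) = dot3 (pu f (u, 0)) (pv h (u, 0)) := by
  unfold Ft
  rw [pv_dot3 (H.differentiable_pu_f _) (H.differentiable_h _), H.pv_pu_f_axis,
    dot3_zero_left, zero_add]

lemma pv_Gt (p : ℝ × ℝ) : pv (Gt h) p = 2 * dot3 (pv h p) (h p) := by
  unfold Gt
  rw [pv_dot3 (H.differentiable_h _) (H.differentiable_h _), dot3_comm (h p), two_mul]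

lemma pv_Lt_axis (u : ℝ) : pv (Lt f ν) (u, 0) = 0 := by
  unfold Lt
  rw [pv_neg, pv_dot3 (H.differentiable_pu_f _) (H.differentiable_pu_ν _), H.pv_pu_f_axis,
    H.pv_pu_ν_axis, dot3_zero_left, dot3_zero_right, add_zero, neg_zero]

lemma pv_Mt_axis (u : ℝ) :
    pv (Mt h ν) (u, 0) =
      Lt f ν (u, 0) * pv (Ft f h) (u, 0) + Mt h ν (u, 0) * pv (Gt h) (u, 0) / 2 := by
  have mixed : pv (Mt h ν) (u, 0) = -dot3 (pv h (u, 0)) (pu ν (u, 0)) := by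
    unfold Mt
    rw [pv_neg, pv_dot3 (H.differentiable_h _) (H.differentiable_pu_ν _), H.pv_pu_ν_axis,
      dot3_zero_right, add_zero]
  rw [mixed, dot3_eq_sum_of_orthonormal (H.adapted_fu u) (H.adapted_h u) (H.unit_ν (u, 0))
    (H.adapted_fu_h u) (H.orth_fu_ν (u, 0)) (H.adapted_h_ν u), H.dot3_pv_h_ν_axis, H.pv_Ft_axis,
    H.pv_Gt, dot3_comm (pu f (u, 0)) (pv h (u, 0)), Lt, Mt]
  ring

end SingularCurve

section FocalSurface

variable (H : AdaptedPureFrontal f ν h ν₁) {ε : ℝ} {u : ℝ}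
include H

lemma differentiableAt_Hm : DifferentiableAt ℝ (Hm f ν h ν₁) (u, 0) := by
  have numerator : Differentiable ℝ fun p =>
      Et f p * Nt1 h ν₁ p - 2 * Ft f h p * Mt h ν p + Gt h p * Lt f ν p :=
    ((H.differentiable_Et.mul H.differentiable_Nt1).sub
      ((H.differentiable_Ft.const_mul 2).mul H.differentiable_Mt)).add
      (H.differentiable_Gt.mul H.differentiable_Lt)
  exact (numerator (u, 0)).fun_mul ((H.differentiable_gram.const_mul 2 (u, 0)).inv
    (mul_ne_zero two_ne_zero (H.gram_axis_ne_zero u)))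

lemma differentiableAt_Kg : DifferentiableAt ℝ (Kg f ν h ν₁) (u, 0) := by
  have numerator : Differentiable ℝ fun p => Lt f ν p * Nt1 h ν₁ p - Mt h ν p ^ 2 :=
    (H.differentiable_Lt.mul H.differentiable_Nt1).sub (H.differentiable_Mt.pow 2)
  exact (numerator (u, 0)).fun_mul ((H.differentiable_gram (u, 0)).inv (H.gram_axis_ne_zero u))

lemma differentiableAt_kap (hkt : kt h ν u ≠ 0) :
    DifferentiableAt ℝ (kap f ν h ν₁ ε) (u, 0) :=
  H.differentiableAt_Hm.add ((((H.differentiableAt_Hm.pow 2).sub H.differentiableAt_Kg).sqrt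
    (H.discr_axis_pos hkt).ne').const_mul ε)

lemma differentiableAt_rho (hkt : kt h ν u ≠ 0) (hκ : kap f ν h ν₁ ε (u, 0) ≠ 0) :
    DifferentiableAt ℝ (rho f ν h ν₁ ε) (u, 0) :=
  (H.differentiableAt_kap hkt).inv hκ

lemma kap_characteristic_axis (hε : ε = 1 ∨ ε = -1) (hkt : kt h ν u ≠ 0) :
    (Lt f ν (u, 0) - kap f ν h ν₁ ε (u, 0)) * (Nt1 h ν₁ (u, 0) - kap f ν h ν₁ ε (u, 0)) =
      Mt h ν (u, 0) ^ 2 := by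
  have characteristic := kap_characteristic hε (H.gram_axis_ne_zero u)
    (H.discr_axis_pos hkt).le
  rwa [H.Et_axis, H.Ft_axis, H.Gt_axis, mul_one, mul_zero, sub_zero] at characteristic

lemma Lt_sub_kap_axis_ne_zero (hε : ε = 1 ∨ ε = -1) (hkt : kt h ν u ≠ 0) :
    Lt f ν (u, 0) - kap f ν h ν₁ ε (u, 0) ≠ 0 :=
  left_ne_zero_of_mul (H.kap_characteristic_axis hε hkt ▸ pow_ne_zero 2 hkt)

lemma Lt_add_Nt1_sub_two_mul_kap_axis_ne_zero (hε : ε = 1 ∨ ε = -1) (hkt : kt h ν u ≠ 0) :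
    Lt f ν (u, 0) + Nt1 h ν₁ (u, 0) - 2 * kap f ν h ν₁ ε (u, 0) ≠ 0 := by
  have gap : Lt f ν (u, 0) + Nt1 h ν₁ (u, 0) - 2 * kap f ν h ν₁ ε (u, 0) =
      -2 * (ε * √(Hm f ν h ν₁ (u, 0) ^ 2 - Kg f ν h ν₁ (u, 0))) := by
    have kap_eq : kap f ν h ν₁ ε (u, 0) =
        Hm f ν h ν₁ (u, 0) + ε * √(Hm f ν h ν₁ (u, 0) ^ 2 - Kg f ν h ν₁ (u, 0)) := rfl
    linear_combination (-2) * H.Hm_axis u - 2 * kap_eq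
  have hε0 : ε ≠ 0 := by rcases hε with rfl | rfl <;> norm_num
  rw [gap]
  exact mul_ne_zero (by norm_num)
    (mul_ne_zero hε0 (Real.sqrt_ne_zero'.mpr (H.discr_axis_pos hkt)))

lemma eventually_kap_characteristic (hε : ε = 1 ∨ ε = -1) (hkt : kt h ν u ≠ 0) :
    ∀ᶠ p in nhds (u, 0),
      (Lt f ν p - kap f ν h ν₁ ε p * Et f p) * (Nt1 h ν₁ p - kap f ν h ν₁ ε p * Gt h p) =
        (Mt h ν p - kap f ν h ν₁ ε p * Ft f h p) ^ 2 := by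
  have gram_ne_zero := H.differentiable_gram.continuous.continuousAt.eventually_ne
    (H.gram_axis_ne_zero u)
  have discr_pos := ((H.differentiableAt_Hm.pow 2).sub
    H.differentiableAt_Kg).continuousAt.eventually_const_lt (H.discr_axis_pos hkt)
  filter_upwards [gram_ne_zero, discr_pos] with p hgram hdiscr
  exact kap_characteristic hε hgram hdiscr.le

lemma pv_kap_axis_mul (hε : ε = 1 ∨ ε = -1) (hkt : kt h ν u ≠ 0) :
    pv (kap f ν h ν₁ ε) (u, 0) *
        (Lt f ν (u, 0) + Nt1 h ν₁ (u, 0) - 2 * kap f ν h ν₁ ε (u, 0)) =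
      (Lt f ν (u, 0) - kap f ν h ν₁ ε (u, 0)) * (rc f ν h ν₁ u / 24) := by
  have dκ := hasDerivAt_pv (H.differentiableAt_kap (ε := ε) hkt)
  have dLκE := (hasDerivAt_pv (H.differentiable_Lt (u, 0))).sub
    (dκ.mul (hasDerivAt_pv (H.differentiable_Et (u, 0))))
  have dNκG := (hasDerivAt_pv (H.differentiable_Nt1 (u, 0))).sub
    (dκ.mul (hasDerivAt_pv (H.differentiable_Gt (u, 0))))
  have dMκF := (hasDerivAt_pv (H.differentiable_Mt (u, 0))).sub
    (dκ.mul (hasDerivAt_pv (H.differentiable_Ft (u, 0))))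
  have characteristic_along_v := (Continuous.prodMk_right u).continuousAt.eventually
    (H.eventually_kap_characteristic hε hkt)
  have pv_characteristic := (dLκE.mul dNκG).unique
    ((dMκF.pow 2).congr_of_eventuallyEq characteristic_along_v)
  simp only [Pi.sub_apply, Pi.mul_apply, H.Et_axis, H.Ft_axis, H.Gt_axis, H.pv_Et_axis,
    H.pv_Lt_axis, H.pv_Mt_axis] at pv_characteristic
  rw [rc]
  linear_combination
    -pv_characteristic + pv (Gt h) (u, 0) * H.kap_characteristic_axis hε hkt

lemma pv_kap_axis_eq_zero_iff (hε : ε = 1 ∨ ε = -1) (hkt : kt h ν u ≠ 0) :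
    pv (kap f ν h ν₁ ε) (u, 0) = 0 ↔ rc f ν h ν₁ u = 0 := by
  rw [← mul_eq_zero_iff_right (H.Lt_add_Nt1_sub_two_mul_kap_axis_ne_zero hε hkt),
    H.pv_kap_axis_mul hε hkt, mul_eq_zero_iff_left (H.Lt_sub_kap_axis_ne_zero hε hkt),
    div_eq_zero_iff, or_iff_left (by norm_num)]

lemma pv_rho_axis_eq_zero_iff (hkt : kt h ν u ≠ 0) (hκ : kap f ν h ν₁ ε (u, 0) ≠ 0) :
    pv (rho f ν h ν₁ ε) (u, 0) = 0 ↔ pv (kap f ν h ν₁ ε) (u, 0) = 0 := by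
  have pv_rho : pv (rho f ν h ν₁ ε) (u, 0) =
      -pv (kap f ν h ν₁ ε) (u, 0) / kap f ν h ν₁ ε (u, 0) ^ 2 :=
    (hasDerivAt_pv (H.differentiableAt_rho hkt hκ)).unique
      ((hasDerivAt_pv (H.differentiableAt_kap hkt)).inv hκ)
  rw [pv_rho, div_eq_zero_iff, neg_eq_zero, or_iff_left (pow_ne_zero 2 hκ)]

lemma fderiv_Cf_axis_apply (hkt : kt h ν u ≠ 0) (hκ : kap f ν h ν₁ ε (u, 0) ≠ 0) (w : ℝ × ℝ) :
    fderiv ℝ (Cf f ν h ν₁ ε) (u, 0) w = fderiv ℝ f (u, 0) w +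
      (rho f ν h ν₁ ε (u, 0) • fderiv ℝ ν (u, 0) w +
        fderiv ℝ (rho f ν h ν₁ ε) (u, 0) w • ν (u, 0)) := by
  have dρ := H.differentiableAt_rho hkt hκ
  have dν := H.differentiable_ν (u, 0)
  unfold Cf
  rw [fderiv_fun_add (H.differentiable_f _) (dρ.fun_smul dν), fderiv_fun_smul dρ dν]
  rfl

lemma pv_Cf_axis (hkt : kt h ν u ≠ 0) (hκ : kap f ν h ν₁ ε (u, 0) ≠ 0) :
    pv (Cf f ν h ν₁ ε) (u, 0) = pv (rho f ν h ν₁ ε) (u, 0) • ν (u, 0) := by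
  calc pv (Cf f ν h ν₁ ε) (u, 0) = pv f (u, 0) + (rho f ν h ν₁ ε (u, 0) • pv ν (u, 0) +
        pv (rho f ν h ν₁ ε) (u, 0) • ν (u, 0)) := H.fderiv_Cf_axis_apply hkt hκ _
    _ = pv (rho f ν h ν₁ ε) (u, 0) • ν (u, 0) := by
        rw [H.pv_f_axis, H.pv_ν_axis, smul_zero, zero_add, zero_add]

lemma dot3_pu_Cf_h_axis (hkt : kt h ν u ≠ 0) (hκ : kap f ν h ν₁ ε (u, 0) ≠ 0) :
    dot3 (pu (Cf f ν h ν₁ ε) (u, 0)) (h (u, 0)) = -(rho f ν h ν₁ ε (u, 0) * kt h ν u) := by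
  have pu_Cf : pu (Cf f ν h ν₁ ε) (u, 0) = pu f (u, 0) + (rho f ν h ν₁ ε (u, 0) • pu ν (u, 0) +
      pu (rho f ν h ν₁ ε) (u, 0) • ν (u, 0)) := H.fderiv_Cf_axis_apply hkt hκ _
  rw [pu_Cf, dot3_add_left, dot3_add_left, dot3_smul_left, dot3_smul_left, H.adapted_fu_h,
    dot3_comm (ν _), H.adapted_h_ν, dot3_comm (pu ν _), kt, Mt]
  ring

lemma linearIndependent_pu_Cf_ν_axis (hkt : kt h ν u ≠ 0) (hκ : kap f ν h ν₁ ε (u, 0) ≠ 0) :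
    LinearIndependent ℝ ![pu (Cf f ν h ν₁ ε) (u, 0), ν (u, 0)] := by
  refine linearIndependent_pair_of_dot3 ((H.indep (u, 0)).ne_zero 2)
    ((dot3_comm _ _).trans (H.dot3_h_ν _)) ?_
  rw [H.dot3_pu_Cf_h_axis hkt hκ]
  exact neg_ne_zero.mpr (mul_ne_zero (inv_ne_zero hκ) hkt)

end FocalSurface

end AdaptedPureFrontal

theorem stmt_11_general (f ν h ν₁ : ℝ × ℝ → R3) (H : AdaptedPureFrontal f ν h ν₁)
    (ε : ℝ) (hε : ε = 1 ∨ ε = -1) (u : ℝ) (hκ : kap f ν h ν₁ ε (u, 0) ≠ 0)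
    (hkt : kt h ν u ≠ 0) :
    rankAt (Cf f ν h ν₁ ε) (u, 0) ≤ 1 ↔ rc f ν h ν₁ u = 0 := by
  rw [rankAt_le_one_iff, H.pv_Cf_axis hkt hκ,
    linearIndependent_pair_smul_right_iff (H.linearIndependent_pu_Cf_ν_axis hkt hκ), not_not,
    H.pv_rho_axis_eq_zero_iff hkt hκ, H.pv_kap_axis_eq_zero_iff hε hkt]

/-- assuming κ_t(0) ≠ 0, the origin is a singular point of the focal
surface C_j iff r_c(0) = 0. -/
theorem stmt_11 (f ν h ν₁ : ℝ × ℝ → R3) (H : AdaptedPureFrontal f ν h ν₁)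
    (ε : ℝ) (hε : ε = 1 ∨ ε = -1)
    (hHK : ∀ p : ℝ × ℝ, Hm f ν h ν₁ p ^ 2 - Kg f ν h ν₁ p > 0)
    (hκ : ∀ p : ℝ × ℝ, kap f ν h ν₁ ε p ≠ 0)
    (hkt : kt h ν 0 ≠ 0) :
    rankAt (Cf f ν h ν₁ ε) 0 ≤ 1 ↔ rc f ν h ν₁ 0 = 0 :=
  stmt_11_general f ν h ν₁ H ε hε 0 (hκ 0) hkt
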